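/- Let d be a positive integer and J ⊊ I nonzero square-free monomial ideals of S such that I is generated by square-free monomials f_1,…,f_r (r > 0) of degree d and J is generated by square-free monomials of degree d+1, and let s = ρ_{d+1}(I) − ρ_{d+1}(J) be the number of square-free monomials of degree d+1 lying in I \ J. If r > s, then sdepth_S (I/J) = d. -/

import Mathlib

open MvPolynomial

/-- The square-free monomial `∏ i ∈ T, X i` associated to a set `T` of variables. -/
noncomputable def sqMon (K : Type) [Field K] {n : ℕ} (T : Finset (Fin n)) :
    MvPolynomial (Fin n) K :=
  ∏ i ∈ T, X i

/-- `GenBySqMonOfDeg K P I` means: `I` is generated by square-free monomials whose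
degrees satisfy the predicate `P`. -/
def GenBySqMonOfDeg (K : Type) [Field K] {n : ℕ} (P : ℕ → Prop)
    (I : Ideal (MvPolynomial (Fin n) K)) : Prop :=
  ∃ G : Set (Finset (Fin n)), (∀ T ∈ G, P T.card) ∧ I = Ideal.span (sqMon K '' G)

/-- `rho K d I` : the number of square-free monomials of degree `d` belonging to `I`. -/
noncomputable def rho (K : Type) [Field K] {n : ℕ} (d : ℕ)
    (I : Ideal (MvPolynomial (Fin n) K)) : ℕ :=
  Set.ncard {T : Finset (Fin n) | T.card = d ∧ sqMon K T ∈ I}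

/-- The maximal graded ideal `(x_1, …, x_n)` of `K[x_1, …, x_n]`. -/
noncomputable def maxGraded (K : Type) [Field K] (n : ℕ) :
    Ideal (MvPolynomial (Fin n) K) :=
  Ideal.span (Set.range (X : Fin n → MvPolynomial (Fin n) K))

/-- The depth of the module `M` with respect to the ideal `I` : the supremum of the
lengths of `M`-regular sequences consisting of elements of `I`. -/
noncomputable def moduleDepth {R : Type} [CommRing R] (I : Ideal R)
    (M : Type) [AddCommGroup M] [Module R M] : ℕ∞ :=
  sSup {k : ℕ∞ | ∃ rs : List R, k = (rs.length : ℕ∞) ∧ (∀ r ∈ rs, r ∈ I) ∧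
    RingTheory.Sequence.IsRegular M rs}

/-- The `R`-module `I/J` (more precisely `I/(I ∩ J)`, which is `I/J` when `J ≤ I`). -/
noncomputable abbrev idealQuot {R : Type} [CommRing R] (I J : Ideal R) : Type :=
  ↥I ⧸ (Submodule.comap I.subtype (J : Submodule R R))

/-- The poset (here: set, ordered by `⊆`, i.e. divisibility of square-free monomials)
of square-free monomials lying in `I \ J`. -/
def monoPoset (K : Type) [Field K] {n : ℕ} (I J : Ideal (MvPolynomial (Fin n) K)) :
    Set (Finset (Fin n)) :=
  {T | sqMon K T ∈ I ∧ sqMon K T ∉ J}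

/-- `C` is a partition of `P` into intervals `[p.1, p.2] = {T | p.1 ⊆ T ⊆ p.2}`:
the intervals have endpoints in `P` and every element of `P` lies in exactly one
of them. -/
def IntervalPartition {n : ℕ} (P : Set (Finset (Fin n)))
    (C : Finset (Finset (Fin n) × Finset (Fin n))) : Prop :=
  (∀ p ∈ C, p.1 ∈ P ∧ p.2 ∈ P ∧ p.1 ⊆ p.2) ∧
  ∀ T ∈ P, ∃! p, p ∈ C ∧ p.1 ⊆ T ∧ T ⊆ p.2

/-- The Stanley depth of `I/J`: the maximum over interval partitions of the poset of
square-free monomials of `I \ J` of the minimal degree of an upper endpoint. -/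
noncomputable def sdepthQuot (K : Type) [Field K] {n : ℕ}
    (I J : Ideal (MvPolynomial (Fin n) K)) : ℕ :=
  sSup {d : ℕ | ∃ C, IntervalPartition (monoPoset K I J) C ∧ ∀ p ∈ C, d ≤ p.2.card}

/-!
For every interval partition of the poset `P` of square-free monomials of `I \ J`, an element of
minimal degree `d` can only be the lower endpoint of its interval. If every upper endpoint had
degree greater than `d`, each of these intervals would also contain an element of degree `d + 1`,
and disjointness would make these elements distinct, contradicting that `P` has fewer elements in
degree `d + 1` than in degree `d`. Conversely, the partition of `P` into singletons attains `d`.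
-/

section SquareFreeMonomials

variable {K : Type} [Field K] {n : ℕ}

theorem sqMon_eq_monomial (T : Finset (Fin n)) :
    sqMon K T = monomial (∑ i ∈ T, Finsupp.single i 1) 1 :=
  (monomial_sum_one T fun i => Finsupp.single i 1).symm

theorem sum_single_one_le_sum_single_one_iff {α : Type*} {U T : Finset α} :
    ∑ i ∈ U, Finsupp.single i (1 : ℕ) ≤ ∑ i ∈ T, Finsupp.single i 1 ↔ U ⊆ T := by
  classical
  rw [← Finsupp.orderIsoMultiset.le_iff_le, Finsupp.coe_orderIsoMultiset,
    Finsupp.toMultiset_sum_single, Finsupp.toMultiset_sum_single, one_smul, one_smul,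
    Finset.val_le_iff]

theorem sqMon_mem_of_subset {I : Ideal (MvPolynomial (Fin n) K)} {T U : Finset (Fin n)}
    (hTU : T ⊆ U) (hT : sqMon K T ∈ I) : sqMon K U ∈ I :=
  I.mem_of_dvd (Finset.prod_dvd_prod_of_subset T U X hTU) hT

theorem sqMon_mem_span_image_iff {G : Set (Finset (Fin n))} {T : Finset (Fin n)} :
    sqMon K T ∈ Ideal.span (sqMon K '' G) ↔ ∃ U ∈ G, U ⊆ T := by
  classical
  have image_eq : sqMon K '' G =
      (fun e => monomial e 1) '' ((fun U => ∑ i ∈ U, Finsupp.single i 1) '' G) := by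
    rw [Set.image_image]
    exact Set.image_congr fun U _ => sqMon_eq_monomial U
  rw [image_eq, mem_ideal_span_monomial_image, sqMon_eq_monomial,
    support_monomial, if_neg one_ne_zero]
  simp only [Finset.mem_singleton, forall_eq, Set.exists_mem_image,
    sum_single_one_le_sum_single_one_iff]

theorem genBySqMonOfDeg_span_range {ι : Type*} {P : ℕ → Prop} {f : ι → Finset (Fin n)}
    (hf : ∀ i, P (f i).card) :
    GenBySqMonOfDeg K P (Ideal.span (Set.range fun i => sqMon K (f i))) :=
  ⟨Set.range f, Set.forall_mem_range.2 hf, congrArg Ideal.span (Set.range_comp (sqMon K) f)⟩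

theorem GenBySqMonOfDeg.exists_le_card {P : ℕ → Prop} {I : Ideal (MvPolynomial (Fin n) K)}
    (hI : GenBySqMonOfDeg K P I) {T : Finset (Fin n)} (hT : sqMon K T ∈ I) :
    ∃ k ≤ T.card, P k := by
  obtain ⟨G, hG, rfl⟩ := hI
  obtain ⟨U, hUG, hUT⟩ := sqMon_mem_span_image_iff.1 hT
  exact ⟨U.card, Finset.card_le_card hUT, hG U hUG⟩

theorem GenBySqMonOfDeg.rho_eq_zero {P : ℕ → Prop} {I : Ideal (MvPolynomial (Fin n) K)}
    (hI : GenBySqMonOfDeg K P I) {d : ℕ} (hd : ∀ k ≤ d, ¬ P k) : rho K d I = 0 := by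
  rw [rho, Set.ncard_eq_zero, Set.eq_empty_iff_forall_notMem]
  rintro T ⟨rfl, hT⟩
  obtain ⟨k, hk, hPk⟩ := hI.exists_le_card hT
  exact hd k hk hPk

theorem rho_span_range_sqMon {ι : Type*} {d : ℕ} {f : ι → Finset (Fin n)}
    (hf : Function.Injective f) (hfd : ∀ i, (f i).card = d) :
    rho K d (Ideal.span (Set.range fun i => sqMon K (f i))) = Nat.card ι := by
  rw [← Set.ncard_range_of_injective hf, rho, Set.range_comp' (sqMon K) f]
  congr 1
  ext T
  rw [Set.mem_ofPred_eq, sqMon_mem_span_image_iff]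
  constructor
  · rintro ⟨hT, _, ⟨i, rfl⟩, hi⟩
    exact ⟨i, Finset.eq_of_subset_of_card_le hi (hT.trans (hfd i).symm).le⟩
  · rintro ⟨i, rfl⟩
    exact ⟨hfd i, f i, ⟨i, rfl⟩, subset_rfl⟩

theorem ordConnected_monoPoset (I J : Ideal (MvPolynomial (Fin n) K)) :
    (monoPoset K I J).OrdConnected :=
  ⟨fun _ hT _ hV _ hU =>
    ⟨sqMon_mem_of_subset hU.1 hT.1, fun hUJ => hV.2 (sqMon_mem_of_subset hU.2 hUJ)⟩⟩

theorem ncard_monoPoset_card_eq {I J : Ideal (MvPolynomial (Fin n) K)} (hJI : J ≤ I) (k : ℕ) :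
    {T ∈ monoPoset K I J | T.card = k}.ncard = rho K k I - rho K k J := by
  have hsub : {T : Finset (Fin n) | T.card = k ∧ sqMon K T ∈ J} ⊆
      {T | T.card = k ∧ sqMon K T ∈ I} := fun T hT => ⟨hT.1, hJI hT.2⟩
  rw [rho, rho, ← Set.ncard_sdiff hsub]
  congr 1
  ext T
  simp only [monoPoset, Set.mem_ofPred_eq, Set.mem_sdiff]
  tauto

end SquareFreeMonomials

namespace IntervalPartition

variable {n : ℕ} {P : Set (Finset (Fin n))} {C : Finset (Finset (Fin n) × Finset (Fin n))}

theorem diag (Q : Finset (Finset (Fin n))) :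
    IntervalPartition (Q : Set (Finset (Fin n))) Q.diag := by
  refine ⟨fun p hp => ?_, fun T hT => ⟨(T, T), ?_, ?_⟩⟩
  · obtain ⟨hpQ, hp_eq⟩ := Finset.mem_diag.1 hp
    exact ⟨hpQ, hp_eq ▸ hpQ, hp_eq.subset⟩
  · exact ⟨Finset.mem_diag.2 ⟨hT, rfl⟩, subset_rfl, subset_rfl⟩
  · rintro ⟨U, V⟩ ⟨hUV, hUT, hTV⟩
    obtain rfl : U = V := (Finset.mem_diag.1 hUV).2
    obtain rfl : U = T := hUT.antisymm hTV
    rfl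

theorem exists_upper_of_minimal (hC : IntervalPartition P C) {T : Finset (Fin n)}
    (hT : Minimal (· ∈ P) T) : ∃ V, (T, V) ∈ C := by
  obtain ⟨⟨U, V⟩, ⟨hUV, hUT, -⟩, -⟩ := hC.2 T hT.prop
  exact ⟨V, hT.eq_of_le (hC.1 _ hUV).1 hUT ▸ hUV⟩

theorem ncard_card_eq_le_ncard_card_eq_succ (hC : IntervalPartition P C) (hP : P.OrdConnected)
    {d : ℕ} (hd : ∀ T ∈ P, d ≤ T.card) (hCd : ∀ p ∈ C, d < p.2.card) :
    {T ∈ P | T.card = d}.ncard ≤ {T ∈ P | T.card = d + 1}.ncard := by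
  have exists_succ : ∀ T ∈ {T ∈ P | T.card = d},
      ∃ U ∈ {U ∈ P | U.card = d + 1}, ∃ V, (T, V) ∈ C ∧ T ⊆ U ∧ U ⊆ V := by
    rintro T ⟨hT, hTd⟩
    have hT_min : Minimal (· ∈ P) T := ⟨hT, fun U hU hUT =>
      (Finset.eq_of_subset_of_card_le hUT (hTd.trans_le (hd U hU))).ge⟩
    obtain ⟨V, hTV⟩ := hC.exists_upper_of_minimal hT_min
    obtain ⟨-, hV, hTV_sub⟩ := hC.1 _ hTV
    obtain ⟨U, hTU, hUV, hU⟩ :=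
      Finset.exists_subsuperset_card_eq hTV_sub (hTd.trans_le d.le_succ) (hCd _ hTV)
    exact ⟨U, ⟨hP.out hT hV ⟨hTU, hUV⟩, hU⟩, V, hTV, hTU, hUV⟩
  choose! g hgP V hVC hTg hgV using exists_succ
  refine Set.ncard_le_ncard_of_injOn g hgP fun T hT T' hT' hg => ?_
  have same_interval : (T, V T) = (T', V T') := (hC.2 (g T) (hgP T hT).1).unique
    ⟨hVC T hT, hTg T hT, hgV T hT⟩ ⟨hVC T' hT', hg ▸ hTg T' hT', hg ▸ hgV T' hT'⟩
  exact congrArg Prod.fst same_interval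

end IntervalPartition

theorem stmt_19_general {K : Type} [Field K] {n d : ℕ} {I J : Ideal (MvPolynomial (Fin n) K)}
    (hJI : J ≤ I) (hd : ∀ T ∈ monoPoset K I J, d ≤ T.card)
    (hrho : rho K (d + 1) I - rho K (d + 1) J < rho K d I - rho K d J) :
    sdepthQuot K I J = d := by
  refine IsGreatest.csSup_eq ⟨?_, ?_⟩
  · let Q := (monoPoset K I J).toFinite.toFinset
    have hQ : (Q : Set (Finset (Fin n))) = monoPoset K I J := Set.Finite.coe_toFinset _
    have hC : IntervalPartition (monoPoset K I J) Q.diag := hQ ▸ IntervalPartition.diag Q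
    exact ⟨Q.diag, hC, fun p hp => hd p.2 (hC.1 p hp).2.1⟩
  · rintro k ⟨C, hC, hk⟩
    by_contra! hdk
    have hle := hC.ncard_card_eq_le_ncard_card_eq_succ (ordConnected_monoPoset I J) hd
      fun p hp => hdk.trans_le (hk p hp)
    rw [ncard_monoPoset_card_eq hJI, ncard_monoPoset_card_eq hJI] at hle
    exact hle.not_gt hrho

/-- Remark 2.6: if `r > s` then the Stanley depth of `I/J` is `d`. -/
theorem stmt_19 (n : ℕ) (K : Type) [Field K] (d : ℕ) (hd : 0 < d)
    (I J : Ideal (MvPolynomial (Fin n) K)) (hJ0 : J ≠ ⊥) (hJI : J < I)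
    (r : ℕ) (hr : 0 < r) (f : Fin r → Finset (Fin n)) (hfinj : Function.Injective f)
    (hfd : ∀ i, (f i).card = d)
    (hIgen : I = Ideal.span (Set.range fun i => sqMon K (f i)))
    (hJgen : GenBySqMonOfDeg K (fun k => k = d + 1) J)
    (hrs : rho K (d + 1) I - rho K (d + 1) J < r) :
    sdepthQuot K I J = d := by
  have hI : GenBySqMonOfDeg K (· = d) I := hIgen ▸ genBySqMonOfDeg_span_range hfd
  have hrI : rho K d I = r := by rw [hIgen, rho_span_range_sqMon hfinj hfd, Nat.card_fin]
  have hrJ : rho K d J = 0 := hJgen.rho_eq_zero (by omega)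
  exact stmt_19_general hJI.le (fun T hT => by simpa using hI.exists_le_card hT.1) (by omega)
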